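/- arXiv:2510.24268 — 2 statements merged into one kernel-verified Lean document; each statement's English description precedes it below -/
import Mathlib

section
/- Let d ≥ 3 be an integer and let p > 1 + 2/d. For every α > 0 there exists exactly one function U ∈ C²([0,∞)) with U(0) = α and U'(0) = 0 such that for all ρ > 0, U''(ρ) + ((d−1)/ρ + ρ/2)·U'(ρ) + U(ρ)/(p−1) + |U(ρ)|^{p−1}U(ρ) = 0. -/
open Set

noncomputable section

/-- `U` is the expander profile with `U(0) = α`, `U'(0) = 0` (one-sided derivative at `0`),
`U ∈ C²([0,∞))`, solving `U'' + ((d−1)/ρ + ρ/2)U' + U/(p−1) + |U|^{p−1}U = 0` on `(0,∞)`. -/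
def IsExpander (d : ℕ) (p α : ℝ) (U : ℝ → ℝ) : Prop :=
  ContDiffOn ℝ 2 U (Ici 0) ∧ U 0 = α ∧ derivWithin U (Ici 0) 0 = 0 ∧
    ∀ ρ : ℝ, 0 < ρ →
      deriv (deriv U) ρ + (((d : ℝ) - 1) / ρ + ρ / 2) * deriv U ρ
        + U ρ / (p - 1) + |U ρ| ^ (p - 1) * U ρ = 0

/-- The averaged kernel. -/
def kk (n : ℕ) (G : ℝ → ℝ) (r : ℝ) : ℝ :=
  ∫ t in (0:ℝ)..1, t ^ n * Real.exp ((t ^ 2 - 1) * r ^ 2 / 4) * G (t * r)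

lemma kk_continuous (n : ℕ) (G : ℝ → ℝ) (hG : Continuous G) : Continuous (kk n G) := by
  unfold kk
  apply intervalIntegral.continuous_parametric_intervalIntegral_of_continuous'
  fun_prop

lemma kk_bound (n : ℕ) (G : ℝ → ℝ) (r C : ℝ) (h : ∀ t ∈ Icc (0:ℝ) 1, |G (t * r)| ≤ C) :
    |kk n G r| ≤ C := by
  have := intervalIntegral.norm_integral_le_of_norm_le_const (a := (0:ℝ)) (b := 1) (C := C)
    (f := fun t => t ^ n * Real.exp ((t ^ 2 - 1) * r ^ 2 / 4) * G (t * r)) ?_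
  · simpa [kk] using this
  · intro t ht
    rw [uIoc_of_le zero_le_one] at ht
    have h1 := h t ⟨ht.1.le, ht.2⟩
    have h2 : |t ^ n| ≤ 1 := by
      rw [abs_of_nonneg (pow_nonneg ht.1.le n)]
      exact pow_le_one₀ ht.1.le ht.2
    have h3 : |Real.exp ((t ^ 2 - 1) * r ^ 2 / 4)| ≤ 1 := by
      rw [abs_of_pos (Real.exp_pos _), Real.exp_le_one_iff]
      have : t ^ 2 ≤ 1 := pow_le_one₀ ht.1.le ht.2
      nlinarith [sq_nonneg r]
    rw [Real.norm_eq_abs, abs_mul, abs_mul]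
    have h4 : |t ^ n| * |Real.exp ((t ^ 2 - 1) * r ^ 2 / 4)| ≤ 1 :=
      mul_le_one₀ h2 (abs_nonneg _) h3
    calc _ ≤ 1 * |G (t * r)| := mul_le_mul_of_nonneg_right h4 (abs_nonneg _)
      _ ≤ C := by simpa using h1

lemma kk_sub (n : ℕ) (G H : ℝ → ℝ) (hG : Continuous G) (hH : Continuous H) (r : ℝ) :
    kk n G r - kk n H r = kk n (fun s => G s - H s) r := by
  unfold kk
  rw [← intervalIntegral.integral_sub]
  · congr 1; ext t; ring
  · exact Continuous.intervalIntegrable (by fun_prop) _ _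
  · exact Continuous.intervalIntegrable (by fun_prop) _ _

lemma kk_eq (n : ℕ) (G : ℝ → ℝ) (r : ℝ) :
    (r ^ n * Real.exp (r ^ 2 / 4)) * (r * kk n G r)
      = ∫ s in (0:ℝ)..r, s ^ n * Real.exp (s ^ 2 / 4) * G s := by
  have := intervalIntegral.mul_integral_comp_mul_left (a := (0:ℝ)) (b := 1)
    (f := fun s => s ^ n * Real.exp (s ^ 2 / 4) * G s) r
  simp only [mul_zero, mul_one] at this
  rw [← this, kk, mul_left_comm, ← intervalIntegral.integral_const_mul]
  congr 1
  apply intervalIntegral.integral_congr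
  intro t _
  have e : Real.exp ((r * t) ^ 2 / 4)
      = Real.exp (r ^ 2 / 4) * Real.exp ((t ^ 2 - 1) * r ^ 2 / 4) := by
    rw [← Real.exp_add]; congr 1; ring
  simp only [e, mul_comm t r]
  rw [mul_pow r t n]
  ring

lemma kk_deriv (n : ℕ) (G : ℝ → ℝ) (hG : Continuous G) (r : ℝ) :
    HasDerivAt (fun r => r * kk n G r) (G r - (n + r ^ 2 / 2) * kk n G r) r := by
  by_cases hr : r = 0
  · subst hr
    have hk0 : kk n G 0 = G 0 / (n + 1) := by
      simp [kk, integral_pow]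
      field_simp
    have e : G 0 - (n + (0:ℝ) ^ 2 / 2) * kk n G 0 = kk n G 0 := by
      rw [hk0]
      have : (n : ℝ) + 1 ≠ 0 := by positivity
      field_simp
      ring
    rw [e, hasDerivAt_iff_tendsto_slope]
    have h1 : Filter.Tendsto (kk n G) (nhdsWithin 0 {0}ᶜ) (nhds (kk n G 0)) :=
      ((kk_continuous n G hG).tendsto 0).mono_left nhdsWithin_le_nhds
    refine h1.congr' ?_
    filter_upwards [self_mem_nhdsWithin] with x hx
    have hx' : x ≠ 0 := hx
    simp [slope_def_field]
    field_simp
  · have hw : HasDerivAt (fun r : ℝ => r ^ n * Real.exp (r ^ 2 / 4))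
        ((n / r + r / 2) * (r ^ n * Real.exp (r ^ 2 / 4))) r := by
      have h1 := (hasDerivAt_pow n r).mul (((hasDerivAt_pow 2 r).div_const 4).exp)
      refine h1.congr_deriv ?_
      rcases n with _ | m
      · simp; ring
      · simp only [Nat.add_sub_cancel, pow_succ]
        field_simp
        push_cast
        ring
    have hW : HasDerivAt (fun r => ∫ s in (0:ℝ)..r, s ^ n * Real.exp (s ^ 2 / 4) * G s)
        (r ^ n * Real.exp (r ^ 2 / 4) * G r) r := by
      have hc : Continuous (fun s => s ^ n * Real.exp (s ^ 2 / 4) * G s) := by fun_prop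
      exact hc.integral_hasStrictDerivAt 0 r |>.hasDerivAt
    have hne : r ^ n * Real.exp (r ^ 2 / 4) ≠ 0 :=
      mul_ne_zero (pow_ne_zero _ hr) (Real.exp_pos _).ne'
    have hq := hW.div hw hne
    have hq2 := hq.congr_of_eventuallyEq (f₁ := fun r => r * kk n G r) ?_
    · refine hq2.congr_deriv ?_
      rw [← kk_eq]
      field_simp
    · filter_upwards [isOpen_ne.mem_nhds hr] with x hx
      have hx' : x ^ n * Real.exp (x ^ 2 / 4) ≠ 0 :=
        mul_ne_zero (pow_ne_zero _ hx) (Real.exp_pos _).ne'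
      simp only [Pi.div_apply]
      rw [← kk_eq, mul_div_cancel_left₀ _ hx']

lemma exists_fixed (n : ℕ) (α : ℝ) (g : ℝ → ℝ) (hgc : Continuous g) (L B : ℝ) (hL : 0 ≤ L)
    (hgL : ∀ x y, |g x - g y| ≤ L * |x - y|) (hgB : ∀ x, |g x| ≤ B) :
    ∃ W : ℝ → ℝ, Continuous W ∧
      ∀ x, 0 ≤ x → W x = α - ∫ r in (0:ℝ)..x, r * kk n (fun s => g (W s)) r := by
  set l : ℝ := L + 1 with hl
  have hB : 0 ≤ B := (abs_nonneg _).trans (hgB 0)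
  let GG : (BoundedContinuousFunction ℝ ℝ) → ℝ → ℝ := fun V s => g (Real.exp (l * s ^ 2) * V s)
  have hGG : ∀ V, Continuous (GG V) := fun V => by
    have := V.continuous
    simp only [GG]; fun_prop
  have hkc : ∀ V, Continuous (fun r => r * kk n (GG V) r) := fun V =>
    continuous_id.mul (kk_continuous n _ (hGG V))
  let F : (BoundedContinuousFunction ℝ ℝ) → ℝ → ℝ := fun V x =>
    Real.exp (-(l * x ^ 2)) * (α - ∫ r in (0:ℝ)..|x|, r * kk n (GG V) r)
  have hFc : ∀ V, Continuous (F V) := fun V => by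
    have h1 : Continuous (fun y => ∫ r in (0:ℝ)..y, r * kk n (GG V) r) :=
      intervalIntegral.continuous_primitive (fun a b => (hkc V).intervalIntegrable a b) 0
    have h2 := h1.comp continuous_abs
    simp only [F]
    exact (by fun_prop : Continuous fun x : ℝ => Real.exp (-(l * x ^ 2))).mul
      (continuous_const.sub h2)
  have hFb : ∀ V x, ‖F V x‖ ≤ |α| + B := by
    intro V x
    have h1 : ‖∫ r in (0:ℝ)..|x|, r * kk n (GG V) r‖ ≤ ∫ r in (0:ℝ)..|x|, B * r := by
      apply intervalIntegral.norm_integral_le_of_norm_le (abs_nonneg x)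
      · refine Filter.Eventually.of_forall fun r hr => ?_
        rw [Real.norm_eq_abs, abs_mul, abs_of_pos hr.1, mul_comm]
        exact mul_le_mul_of_nonneg_right (kk_bound n _ r B fun t _ => hgB _) hr.1.le
      · exact Continuous.intervalIntegrable (by fun_prop) _ _
    rw [intervalIntegral.integral_const_mul, integral_id, sq_abs] at h1
    have h2 : Real.exp (-(l * x ^ 2)) ≤ 1 := by
      rw [Real.exp_le_one_iff]; have := sq_nonneg x; nlinarith
    have h3 : Real.exp (-(l * x ^ 2)) * x ^ 2 ≤ 1 := by
      have h4 : x ^ 2 ≤ Real.exp (l * x ^ 2) := by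
        have := Real.add_one_le_exp (l * x ^ 2)
        have := sq_nonneg x; nlinarith
      rw [Real.exp_neg, inv_mul_le_iff₀ (Real.exp_pos _)]; linarith
    have h5 := Real.exp_pos (-(l * x ^ 2))
    calc ‖F V x‖ = Real.exp (-(l * x ^ 2)) * ‖α - ∫ r in (0:ℝ)..|x|, r * kk n (GG V) r‖ := by
            simp only [F, norm_mul, Real.norm_eq_abs, Real.abs_exp]
      _ ≤ Real.exp (-(l * x ^ 2)) * (|α| + B * ((x ^ 2 - 0 ^ 2) / 2)) := by
            gcongr
            exact (norm_sub_le _ _).trans (add_le_add le_rfl h1)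
      _ ≤ |α| + B := by nlinarith [abs_nonneg α]
  let Φ : BoundedContinuousFunction ℝ ℝ → BoundedContinuousFunction ℝ ℝ := fun V =>
    BoundedContinuousFunction.ofNormedAddCommGroup (F V) (hFc V) (|α| + B) (hFb V)
  have hΦ : ContractingWith (1/2 : NNReal) Φ := by
    refine ⟨by norm_num, LipschitzWith.of_dist_le_mul fun V W => ?_⟩
    rw [BoundedContinuousFunction.dist_le (by positivity)]
    intro x
    change dist (F V x) (F W x) ≤ _
    set D := dist V W with hD
    have hD0 : 0 ≤ D := dist_nonneg
    have hdiff : F V x - F W x = Real.exp (-(l * x ^ 2)) *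
        ∫ r in (0:ℝ)..|x|, (r * kk n (GG W) r - r * kk n (GG V) r) := by
      rw [intervalIntegral.integral_sub ((hkc W).intervalIntegrable _ _)
        ((hkc V).intervalIntegrable _ _)]
      simp only [F]; ring
    have h1 : ‖∫ r in (0:ℝ)..|x|, (r * kk n (GG W) r - r * kk n (GG V) r)‖
        ≤ ∫ r in (0:ℝ)..|x|, L * D * (r * Real.exp (l * r ^ 2)) := by
      apply intervalIntegral.norm_integral_le_of_norm_le (abs_nonneg x)
      · refine Filter.Eventually.of_forall fun r hr => ?_
        rw [← mul_sub, kk_sub n _ _ (hGG W) (hGG V), Real.norm_eq_abs, abs_mul, abs_of_pos hr.1]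
        have := kk_bound n (fun s => GG W s - GG V s) r (L * D * Real.exp (l * r ^ 2)) ?_
        · calc _ ≤ r * (L * D * Real.exp (l * r ^ 2)) :=
                mul_le_mul_of_nonneg_left this hr.1.le
            _ = _ := by ring
        · intro t ht
          refine (hgL _ _).trans ?_
          rw [← mul_sub, abs_mul, Real.abs_exp]
          have e1 : |W (t * r) - V (t * r)| ≤ D := by
            rw [hD, dist_comm]
            exact BoundedContinuousFunction.dist_coe_le_dist (f := W) (g := V) (t * r)
          have e2 : Real.exp (l * (t * r) ^ 2) ≤ Real.exp (l * r ^ 2) := by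
            apply Real.exp_le_exp.mpr
            have : t ^ 2 ≤ 1 := pow_le_one₀ ht.1 ht.2
            have h3 : (t * r) ^ 2 ≤ r ^ 2 := by
              rw [mul_pow]; nlinarith [sq_nonneg r]
            exact mul_le_mul_of_nonneg_left h3 (by linarith)
          calc L * (Real.exp (l * (t * r) ^ 2) * |W (t * r) - V (t * r)|)
              ≤ L * (Real.exp (l * r ^ 2) * D) := by gcongr
            _ = _ := by ring
      · exact Continuous.intervalIntegrable (by fun_prop) _ _
    have h2 : ∫ r in (0:ℝ)..|x|, r * Real.exp (l * r ^ 2)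
        = (Real.exp (l * x ^ 2) - 1) / (2 * l) := by
      have hlpos : 0 < l := by linarith
      rw [intervalIntegral.integral_eq_sub_of_hasDerivAt
        (f := fun r => Real.exp (l * r ^ 2) / (2 * l))]
      · simp; ring
      · intro r _
        have := (((hasDerivAt_pow 2 r).const_mul l).exp).div_const (2 * l)
        refine this.congr_deriv ?_
        field_simp
        push_cast
        ring
      · exact Continuous.intervalIntegrable (by fun_prop) _ _
    rw [intervalIntegral.integral_const_mul, h2] at h1
    rw [Real.dist_eq, hdiff, abs_mul, Real.abs_exp]
    have hlpos : 0 < l := by linarith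
    calc _ ≤ Real.exp (-(l * x ^ 2)) * (L * D * ((Real.exp (l * x ^ 2) - 1) / (2 * l))) :=
          mul_le_mul_of_nonneg_left h1 (Real.exp_pos _).le
      _ = (L * D / (2 * l)) * (1 - Real.exp (-(l * x ^ 2))) := by
          rw [Real.exp_neg]; field_simp
      _ ≤ (L * D / (2 * l)) * 1 := by
          have := Real.exp_pos (-(l * x ^ 2))
          apply mul_le_mul_of_nonneg_left (by linarith) (by positivity)
      _ ≤ _ := by
          rw [mul_one, div_le_iff₀ (by positivity)]
          push_cast
          nlinarith
  set V := ContractingWith.fixedPoint Φ hΦ with hV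
  have hfix : Φ V = V := hΦ.fixedPoint_isFixedPt
  refine ⟨fun s => Real.exp (l * s ^ 2) * V s, ?_, ?_⟩
  · have := V.continuous
    fun_prop
  · intro x hx
    have h1 : F V x = V x := by
      have : (Φ V) x = V x := by rw [hfix]
      exact this
    simp only
    rw [← h1]
    simp only [F, abs_of_nonneg hx, ← mul_assoc, ← Real.exp_add]
    simp [GG]

lemma exists_sol (n : ℕ) (α : ℝ) (g : ℝ → ℝ) (hgc : Continuous g) (L B : ℝ) (hL : 0 ≤ L)
    (hgL : ∀ x y, |g x - g y| ≤ L * |x - y|) (hgB : ∀ x, |g x| ≤ B) :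
    ∃ U U1 U2 : ℝ → ℝ, (∀ x, HasDerivAt U (U1 x) x) ∧ (∀ x, HasDerivAt U1 (U2 x) x) ∧
      Continuous U2 ∧ U 0 = α ∧ U1 0 = 0 ∧
      ∀ r, 0 < r → U2 r + (n / r + r / 2) * U1 r + g (U r) = 0 := by
  obtain ⟨W, hWc, hW⟩ := exists_fixed n α g hgc L B hL hgL hgB
  set G : ℝ → ℝ := fun s => g (W s) with hG
  have hGc : Continuous G := hgc.comp hWc
  have hk := kk_continuous n G hGc
  have hh : Continuous (fun r => r * kk n G r) := continuous_id.mul hk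
  refine ⟨fun x => α - ∫ r in (0:ℝ)..x, r * kk n G r, fun x => -(x * kk n G x),
    fun x => -(G x - (n + x ^ 2 / 2) * kk n G x), ?_, ?_, by fun_prop, by simp, by simp, ?_⟩
  · intro x
    exact ((hh.integral_hasStrictDerivAt 0 x).hasDerivAt).const_sub α
  · intro x
    exact (kk_deriv n G hGc x).neg
  · intro r hr
    simp only
    rw [← hW r hr.le]
    simp only [hG]
    field_simp
    ring

lemma energy_bound (n : ℕ) (α : ℝ) (hα : 0 < α) (f : ℝ → ℝ) (hf : Continuous f)
    (hodd : ∀ x, f (-x) = - f x) (hpos : ∀ x, 0 < x → 0 < f x)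
    (U U1 U2 : ℝ → ℝ) (hU : ∀ x, 0 < x → HasDerivAt U (U1 x) x)
    (hU1 : ∀ x, 0 < x → HasDerivAt U1 (U2 x) x)
    (hUc : ContinuousOn U (Ici 0)) (hU1c : ContinuousOn U1 (Ici 0))
    (h0 : U 0 = α) (h10 : U1 0 = 0)
    (hode : ∀ r, 0 < r → U2 r + (n / r + r / 2) * U1 r + f (U r) = 0) :
    ∀ r, 0 ≤ r → |U r| ≤ α := by
  set P : ℝ → ℝ := fun u => ∫ s in (0:ℝ)..u, f s with hP
  have hPd : ∀ u, HasDerivAt P (f u) u := fun u =>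
    (hf.integral_hasStrictDerivAt 0 u).hasDerivAt
  have hPc : Continuous P := continuous_iff_continuousAt.2 fun u => (hPd u).continuousAt
  have hPeven : ∀ u, P (-u) = P u := by
    intro u
    have h1 : ∫ s in (0:ℝ)..u, f (-s) = ∫ s in (-u)..(-0), f s :=
      intervalIntegral.integral_comp_neg f
    simp only [hodd, intervalIntegral.integral_neg, neg_zero] at h1
    rw [intervalIntegral.integral_symm 0 (-u)] at h1
    simp only [hP]; linarith
  have hPmono : StrictMonoOn P (Ici 0) := by
    apply strictMonoOn_of_deriv_pos (convex_Ici 0) hPc.continuousOn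
    intro x hx
    rw [interior_Ici] at hx
    rw [(hPd x).deriv]; exact hpos x hx
  have hE : AntitoneOn (fun r => U1 r ^ 2 / 2 + P (U r)) (Ici 0) := by
    apply antitoneOn_of_hasDerivWithinAt_nonpos (convex_Ici 0)
      (f' := fun r => - (n / r + r / 2) * U1 r ^ 2)
    · exact ((hU1c.pow 2).div_const 2).add (hPc.comp_continuousOn hUc)
    · intro x hx
      rw [interior_Ici] at hx ⊢
      have h1 := (((hU1 x hx).pow 2).div_const 2).add ((hPd (U x)).comp x (hU x hx))
      refine (h1.congr_deriv ?_).hasDerivWithinAt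
      have := hode x hx
      have e : U2 x = - (n / x + x / 2) * U1 x - f (U x) := by linarith
      rw [e]; push_cast; ring
    · intro x hx
      rw [interior_Ici] at hx
      have hx' : 0 < x := hx
      have : 0 ≤ (n / x + x / 2) * U1 x ^ 2 := by positivity
      linarith
  intro r hr
  have h1 := hE (mem_Ici.2 le_rfl) (mem_Ici.2 hr) hr
  simp only [h0, h10] at h1
  have h2 : P |U r| ≤ P α := by
    have : P |U r| = P (U r) := by
      rcases abs_cases (U r) with h | h
      · rw [h.1]
      · rw [h.1, hPeven]
    rw [this]; nlinarith [sq_nonneg (U1 r)]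
  exact (hPmono.le_iff_le (mem_Ici.2 (abs_nonneg _)) (mem_Ici.2 hα.le)).1 h2

lemma uniq (n : ℕ) (g : ℝ → ℝ) (L : ℝ) (hL : 0 ≤ L)
    (hgL : ∀ x y, |g x - g y| ≤ L * |x - y|)
    (U U1 U2 : ℝ → ℝ) (hU : ∀ x, 0 < x → HasDerivAt U (U1 x) x)
    (hU1 : ∀ x, 0 < x → HasDerivAt U1 (U2 x) x)
    (hUc : ContinuousOn U (Ici 0)) (hU1c : ContinuousOn U1 (Ici 0))
    (V V1 V2 : ℝ → ℝ) (hV : ∀ x, 0 < x → HasDerivAt V (V1 x) x)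
    (hV1 : ∀ x, 0 < x → HasDerivAt V1 (V2 x) x)
    (hVc : ContinuousOn V (Ici 0)) (hV1c : ContinuousOn V1 (Ici 0))
    (h0 : U 0 = V 0) (h10 : U1 0 = V1 0)
    (hodeU : ∀ r, 0 < r → U2 r + (n / r + r / 2) * U1 r + g (U r) = 0)
    (hodeV : ∀ r, 0 < r → V2 r + (n / r + r / 2) * V1 r + g (V r) = 0) :
    ∀ r, 0 ≤ r → V r = U r := by
  have hE : AntitoneOn (fun r => Real.exp (-((L + 1) * r)) *
      ((U1 r - V1 r) ^ 2 + (U r - V r) ^ 2)) (Ici 0) := by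
    apply antitoneOn_of_hasDerivWithinAt_nonpos (convex_Ici 0)
      (f' := fun r => Real.exp (-((L + 1) * r)) * (-(L + 1) *
        ((U1 r - V1 r) ^ 2 + (U r - V r) ^ 2) + (2 * (U1 r - V1 r) * (U2 r - V2 r)
          + 2 * (U r - V r) * (U1 r - V1 r))))
    · exact (by fun_prop : Continuous fun r : ℝ => Real.exp (-((L + 1) * r))).continuousOn.mul
        (((hU1c.sub hV1c).pow 2).add ((hUc.sub hVc).pow 2))
    · intro x hx
      rw [interior_Ici] at hx ⊢
      have h1 := (((hasDerivAt_id x).const_mul (L + 1)).neg.exp).mul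
        ((((hU1 x hx).sub (hV1 x hx)).pow 2).add (((hU x hx).sub (hV x hx)).pow 2))
      refine (h1.congr_deriv ?_).hasDerivWithinAt
      simp
      ring
    · intro x hx
      rw [interior_Ici] at hx
      have hx' : 0 < x := hx
      have e : U2 x - V2 x = - (n / x + x / 2) * (U1 x - V1 x) - (g (U x) - g (V x)) := by
        linarith [hodeU x hx, hodeV x hx]
      rw [e]
      apply mul_nonpos_of_nonneg_of_nonpos (Real.exp_pos _).le
      have ha : 0 ≤ (n / x + x / 2) * (U1 x - V1 x) ^ 2 := by positivity
      set a := U1 x - V1 x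
      set b := U x - V x with hb
      have hg : |g (U x) - g (V x)| ≤ L * |b| := hgL _ _
      set c := g (U x) - g (V x)
      have h1 : -(a * c) ≤ L * (|a| * |b|) := by
        calc -(a * c) ≤ |a * c| := neg_le_abs _
          _ = |a| * |c| := abs_mul _ _
          _ ≤ |a| * (L * |b|) := mul_le_mul_of_nonneg_left hg (abs_nonneg _)
          _ = _ := by ring
      have h2 : b * a ≤ |a| * |b| := by
        rw [← abs_mul, mul_comm]; exact le_abs_self _
      have h3 : 2 * (|a| * |b|) ≤ a ^ 2 + b ^ 2 := by
        have := sq_nonneg (|a| - |b|)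
        have h4 := sq_abs a
        have h5 := sq_abs b
        nlinarith
      have h6 := mul_le_mul_of_nonneg_left h3 (by linarith : 0 ≤ L + 1)
      linarith
  intro r hr
  have h1 := hE (mem_Ici.2 le_rfl) (mem_Ici.2 hr) hr
  simp only [h0, h10] at h1
  have h2 : (U1 r - V1 r) ^ 2 + (U r - V r) ^ 2 ≤ 0 := by
    by_contra hc
    push Not at hc
    have := mul_pos (Real.exp_pos (-((L + 1) * r))) hc
    simp at h1
    linarith
  have h3 : (U r - V r) ^ 2 = 0 := by
    nlinarith [sq_nonneg (U1 r - V1 r), sq_nonneg (U r - V r)]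
  have := pow_eq_zero_iff (two_ne_zero) |>.1 h3
  linarith

lemma pow_deriv (q : ℝ) (hq : 0 < q) (x : ℝ) :
    HasDerivAt (fun u : ℝ => |u| ^ q * u) ((q + 1) * |x| ^ q) x := by
  rcases lt_trichotomy x 0 with hx | hx | hx
  · have h1 : HasDerivAt (fun u : ℝ => (-u) ^ q * u) (-1 * q * (-x) ^ (q - 1) * x + (-x) ^ q * 1) x :=
      ((hasDerivAt_neg x).rpow_const (Or.inl (by linarith))).mul (hasDerivAt_id x)
    have h2 := h1.congr_of_eventuallyEq (f₁ := fun u : ℝ => |u| ^ q * u) (by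
      filter_upwards [isOpen_Iio.mem_nhds hx] with u hu
      rw [abs_of_neg hu])
    refine h2.congr_deriv ?_
    rw [abs_of_neg hx]
    have : (-x) ^ q = (-x) ^ (q - 1) * (-x) := by
      rw [← Real.rpow_add_one (by linarith)]; ring_nf
    rw [this]; ring
  · subst hx
    rw [hasDerivAt_iff_tendsto_slope]
    have hc : Continuous (fun u : ℝ => |u| ^ q) :=
      continuous_abs.rpow_const (fun _ => Or.inr hq.le)
    have h1 := (hc.tendsto 0).mono_left (nhdsWithin_le_nhds (s := {0}ᶜ))
    simp only [abs_zero, Real.zero_rpow hq.ne', mul_zero] at h1 ⊢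
    refine h1.congr' ?_
    filter_upwards [self_mem_nhdsWithin] with u hu
    have hu' : u ≠ 0 := hu
    simp [slope_def_field]
    field_simp
  · have h1 : HasDerivAt (fun u : ℝ => u ^ q * u) (1 * q * x ^ (q - 1) * x + x ^ q * 1) x :=
      ((hasDerivAt_id x).rpow_const (Or.inl hx.ne')).mul (hasDerivAt_id x)
    have h2 := h1.congr_of_eventuallyEq (f₁ := fun u : ℝ => |u| ^ q * u) (by
      filter_upwards [isOpen_Ioi.mem_nhds hx] with u hu
      rw [abs_of_pos hu])
    refine h2.congr_deriv ?_
    rw [abs_of_pos hx]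
    have : x ^ q = x ^ (q - 1) * x := by
      rw [← Real.rpow_add_one hx.ne']; ring_nf
    rw [this]; ring

/-- For `d ≥ 3`, `p > 1 + 2/d` and `α > 0` there is exactly one function
`U ∈ C²([0,∞))` with `U(0) = α`, `U'(0) = 0` solving the expander ODE on `(0,∞)`. -/
theorem stmt0 (d : ℕ) (hd : 3 ≤ d) (p : ℝ) (hp : 1 + 2 / (d : ℝ) < p)
    (α : ℝ) (hα : 0 < α) :
    ∃ U : ℝ → ℝ, IsExpander d p α U ∧
      ∀ V : ℝ → ℝ, IsExpander d p α V → EqOn V U (Ici 0) := by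
  obtain ⟨n, rfl⟩ : ∃ n, d = n + 1 := ⟨d - 1, by omega⟩
  have hq : 0 < p - 1 := by
    have : 0 < 2 / ((n + 1 : ℕ) : ℝ) := by positivity
    linarith
  have hn : (((n + 1 : ℕ) : ℝ) - 1) = n := by push_cast; ring
  set f : ℝ → ℝ := fun u => u / (p - 1) + |u| ^ (p - 1) * u with hf
  have hfd : ∀ x, HasDerivAt f (1 / (p - 1) + (p - 1 + 1) * |x| ^ (p - 1)) x := fun x =>
    ((hasDerivAt_id x).div_const (p - 1)).add (pow_deriv (p - 1) hq x)
  have hfc : Continuous f := continuous_iff_continuousAt.2 fun x => (hfd x).continuousAt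
  have hfodd : ∀ x, f (-x) = - f x := fun x => by simp only [hf, abs_neg]; ring
  have hfpos : ∀ x, 0 < x → 0 < f x := fun x hx => by
    have : 0 < |x| := abs_pos.2 hx.ne'
    simp only [hf]; positivity
  set L : ℝ := 1 / (p - 1) + (p - 1 + 1) * α ^ (p - 1) with hLdef
  have hL : 0 ≤ L := by positivity
  have hfL : ∀ x ∈ Icc (-α) α, ∀ y ∈ Icc (-α) α, |f x - f y| ≤ L * |x - y| := by
    intro x hx y hy
    refine (convex_Icc (-α) α).norm_image_sub_le_of_norm_hasDerivWithin_le
      (fun z _ => (hfd z).hasDerivWithinAt) ?_ hy hx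
    intro z hz
    have hz' : |z| ≤ α := abs_le.2 hz
    rw [Real.norm_eq_abs, abs_of_nonneg (by positivity)]
    have := Real.rpow_le_rpow (abs_nonneg z) hz' hq.le
    simp only [hLdef]
    gcongr
  set c : ℝ → ℝ := fun u => max (-α) (min u α) with hc
  have hcm : ∀ u, c u ∈ Icc (-α) α := fun u =>
    ⟨le_max_left _ _, max_le (by linarith) (min_le_right _ _)⟩
  have hcL : ∀ x y, |c x - c y| ≤ |x - y| := fun x y => by
    simp only [hc]
    rw [max_comm (-α), max_comm (-α)]
    exact (abs_max_sub_max_le_abs _ _ _).trans (by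
      simpa [abs_sub_comm] using abs_min_sub_min_le_max x α y α)
  have hceq : ∀ u, |u| ≤ α → c u = u := fun u hu => by
    have := abs_le.1 hu
    simp [hc, this.1, this.2]
  have hcodd : ∀ u, c (-u) = - c u := fun u => by
    simp only [hc]
    rcases le_total u α with h1 | h1 <;> rcases le_total (-α) u with h2 | h2 <;>
      simp only [min_def, max_def] <;> split_ifs <;> linarith
  have hcpos : ∀ u, 0 < u → 0 < c u := fun u hu => lt_max_of_lt_right (lt_min hu hα)
  have hcc : Continuous c := by fun_prop
  set g : ℝ → ℝ := fun u => f (c u) with hg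
  have hgc : Continuous g := hfc.comp hcc
  have hgL : ∀ x y, |g x - g y| ≤ L * |x - y| := fun x y =>
    (hfL _ (hcm x) _ (hcm y)).trans (mul_le_mul_of_nonneg_left (hcL x y) hL)
  have hf0 : f 0 = 0 := by simp [hf]
  have hgB : ∀ x, |g x| ≤ L * α := fun x => by
    have := hfL _ (hcm x) 0 ⟨by linarith, hα.le⟩
    rw [hf0, sub_zero, sub_zero] at this
    exact this.trans (mul_le_mul_of_nonneg_left (abs_le.2 (hcm x)) hL)
  obtain ⟨U, U1, U2, hU, hU1, hU2c, h0, h10, hode⟩ := exists_sol n α g hgc L _ hL hgL hgB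
  have hUcont : Continuous U := continuous_iff_continuousAt.2 fun x => (hU x).continuousAt
  have hU1cont : Continuous U1 := continuous_iff_continuousAt.2 fun x => (hU1 x).continuousAt
  have hUb := energy_bound n α hα g hgc (fun x => by simp only [hg, hcodd, hfodd])
    (fun x hx => hfpos _ (hcpos x hx)) U U1 U2 (fun x _ => hU x) (fun x _ => hU1 x)
    hUcont.continuousOn hU1cont.continuousOn h0 h10 hode
  have hdU : deriv U = U1 := funext fun x => (hU x).deriv
  have hdU1 : deriv U1 = U2 := funext fun x => (hU1 x).deriv
  refine ⟨U, ⟨?_, h0, ?_, ?_⟩, ?_⟩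
  · apply ContDiff.contDiffOn
    have : ContDiff ℝ (1 + 1) U := by
      rw [contDiff_succ_iff_deriv]
      refine ⟨fun x => (hU x).differentiableAt, by simp, ?_⟩
      rw [hdU, contDiff_one_iff_deriv, hdU1]
      exact ⟨fun x => (hU1 x).differentiableAt, hU2c⟩
    simpa [one_add_one_eq_two] using this
  · rw [(hU 0).hasDerivWithinAt.derivWithin (uniqueDiffOn_Ici 0 0 (mem_Ici.2 le_rfl)), h10]
  · intro r hr
    rw [hdU, hdU1, hn]
    have := hode r hr
    simp only [hg, hceq _ (hUb r hr.le), hf] at this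
    linarith
  · rintro V ⟨hVC, hV0, hV10, hVode⟩ r hr
    have hmem : ∀ x : ℝ, 0 < x → Ici (0:ℝ) ∈ nhds x := fun x hx => Ici_mem_nhds hx
    set V1 : ℝ → ℝ := derivWithin V (Ici 0) with hV1def
    have hVd : ∀ x, 0 < x → HasDerivAt V (V1 x) x := fun x hx =>
      (((hVC.differentiableOn (by norm_num)) x hx.le).hasDerivWithinAt).hasDerivAt (hmem x hx)
    have hV1C : ContDiffOn ℝ 1 V1 (Ici 0) :=
      hVC.derivWithin (uniqueDiffOn_Ici 0) (by norm_num)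
    have hV1d : ∀ x, 0 < x → HasDerivAt V1 (derivWithin V1 (Ici 0) x) x := fun x hx =>
      (((hV1C.differentiableOn (by norm_num)) x hx.le).hasDerivWithinAt).hasDerivAt (hmem x hx)
    have hVodef : ∀ r, 0 < r →
        derivWithin V1 (Ici 0) r + (n / r + r / 2) * V1 r + f (V r) = 0 := by
      intro r hr
      have h1 := hVode r hr
      have e1 : deriv V r = V1 r := (hVd r hr).deriv
      have e2 : deriv (deriv V) r = derivWithin V1 (Ici 0) r := by
        have : deriv V =ᶠ[nhds r] V1 := by
          filter_upwards [isOpen_Ioi.mem_nhds hr] with x hx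
          exact (hVd x hx).deriv
        rw [this.deriv_eq]
        exact (hV1d r hr).deriv
      rw [e1, e2, hn] at h1
      simp only [hf]; linarith
    have hVb := energy_bound n α hα f hfc hfodd hfpos V V1 _ hVd hV1d hVC.continuousOn
      hV1C.continuousOn hV0 hV10 hVodef
    refine uniq n g L hL hgL U U1 U2 (fun x _ => hU x) (fun x _ => hU1 x)
      hUcont.continuousOn hU1cont.continuousOn V V1 _ hVd hV1d hVC.continuousOn
      hV1C.continuousOn (h0.trans hV0.symm) (h10.trans hV10.symm) hode ?_ r hr
    intro r hr
    simp only [hg, hceq _ (hVb r hr.le)]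
    exact hVodef r hr
end
end

section
/- Let d ≥ 3 be an integer, p > 1 + 2/d, and α > 0. If U ∈ C²([0,∞)) satisfies U(0) = α, U'(0) = 0, and U''(ρ) + ((d−1)/ρ + ρ/2)·U'(ρ) + U(ρ)/(p−1) + |U(ρ)|^{p−1}U(ρ) = 0 for all ρ > 0, then U is bounded on [0,∞) and the limit lim_{ρ→∞} ρ^{2/(p−1)} U(ρ) exists and is finite. -/
open Set Filter

noncomputable section

/-- Energy estimate: `U` is bounded on `[1,∞)`. -/
lemma energy_bdd (d : ℕ) (hd : 3 ≤ d) (p : ℝ) (hp : 1 < p) (U W W' : ℝ → ℝ)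
    (hU : ∀ r, 0 < r → HasDerivAt U (W r) r) (hW : ∀ r, 0 < r → HasDerivAt W (W' r) r)
    (heq : ∀ r : ℝ, 0 < r → W' r + (((d : ℝ) - 1) / r + r / 2) * W r
        + U r / (p - 1) + |U r| ^ (p - 1) * U r = 0) :
    ∃ C : ℝ, ∀ r : ℝ, 1 ≤ r → |U r| ≤ C := by
  have hd' : (3 : ℝ) ≤ d := by exact_mod_cast hd
  have hp1 : 0 < p - 1 := by linarith
  set E : ℝ → ℝ := fun r => W r ^ 2 / 2 + U r ^ 2 / (2 * (p - 1)) + |U r| ^ (p + 1) / (p + 1)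
    with hE
  have hEd : ∀ r, 0 < r → HasDerivAt E (-(((d : ℝ) - 1) / r + r / 2) * W r ^ 2) r := by
    intro r hr
    have h1 := ((hW r hr).pow 2).div_const 2
    have h2 := ((hU r hr).pow 2).div_const (2 * (p - 1))
    have h3 := (((hasDerivAt_abs_rpow (U r) (p := p + 1) (by linarith)).comp r (hU r hr))).div_const (p + 1)
    have h4 := (h1.add h2).add h3
    refine HasDerivAt.congr_deriv (h4) ?_
    have e := heq r hr
    have e1 : p + 1 - 2 = p - 1 := by ring
    rw [e1]
    have hpp : p + 1 ≠ 0 := by linarith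
    have e2 : W' r = -((((d : ℝ) - 1) / r + r / 2) * W r
        + U r / (p - 1) + |U r| ^ (p - 1) * U r) := by linarith
    rw [e2]
    field_simp
    ring
  have hanti : AntitoneOn E (Ici 1) := by
    apply antitoneOn_of_deriv_nonpos (convex_Ici 1)
    · intro r hr
      exact (hEd r (by have : (1:ℝ) ≤ r := hr; linarith)).continuousAt.continuousWithinAt
    · intro r hr
      rw [interior_Ici] at hr
      have : (1:ℝ) < r := hr
      exact (hEd r (by linarith)).differentiableAt.differentiableWithinAt
    · intro r hr
      rw [interior_Ici] at hr
      have h1 : (1:ℝ) < r := hr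
      rw [(hEd r (by linarith)).deriv]
      have : 0 ≤ (((d : ℝ) - 1) / r + r / 2) := by
        have : 0 ≤ (d:ℝ) - 1 := by linarith
        positivity
      have := mul_nonneg this (sq_nonneg (W r))
      linarith
  refine ⟨Real.sqrt (2 * (p - 1) * E 1), fun r hr => ?_⟩
  apply Real.abs_le_sqrt
  have h1 : E r ≤ E 1 := hanti (by simp) hr hr
  have h2 : U r ^ 2 / (2 * (p - 1)) ≤ E r := by
    have : 0 ≤ W r ^ 2 / 2 := by positivity
    have : 0 ≤ |U r| ^ (p + 1) / (p + 1) := by positivity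
    simp only [hE]; linarith
  have h3 := h2.trans h1
  rw [div_le_iff₀ (by positivity)] at h3
  linarith

/-- Pointwise inequality for the modified energy. -/
lemma quad_ineq (D m Q q r v w : ℝ) (hD : 1 ≤ D) (hm : 0 < m) (hq : m ≤ q) (hQ : q ≤ Q)
    (hr : 1 + 8 * Q ≤ r) :
    2 * v * (-(2 * q / r) * v + (4 * q - 2 * D) / r ^ 2 * w)
      + (2 * w * (-(r / 2 + (D - 1) / r - 2 * q / r) * w - q * v) / r - w ^ 2 / r ^ 2)
      + (4 * m / r - (10 * Q + 4 * D) ^ 2 / r ^ 2) * (v ^ 2 + w ^ 2 / r) ≤ 0 := by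
  have hr0 : 0 < r := by linarith
  have key : ∀ X : ℝ, r ^ 2 * X ≤ 0 → X ≤ 0 := by
    intro X hX
    by_contra h
    push Not at h
    have : 0 < r ^ 2 * X := by positivity
    linarith
  apply key
  set K := 10 * Q + 4 * D with hK
  have e : r ^ 2 * (2 * v * (-(2 * q / r) * v + (4 * q - 2 * D) / r ^ 2 * w)
      + (2 * w * (-(r / 2 + (D - 1) / r - 2 * q / r) * w - q * v) / r - w ^ 2 / r ^ 2)
      + (4 * m / r - K ^ 2 / r ^ 2) * (v ^ 2 + w ^ 2 / r))
      = -(4 * (q - m) * r) * v ^ 2 + v * w * (8 * q - 4 * D - 2 * q * r)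
        - w ^ 2 * (r ^ 2 + 2 * (D - 1) - 4 * q + 1) + 4 * m * w ^ 2 - K ^ 2 * v ^ 2
          - K ^ 2 * w ^ 2 / r := by
    field_simp
    ring
  rw [e]
  have a1 : 0 ≤ (4 * (q - m) * r) * v ^ 2 := by
    have : 0 ≤ q - m := by linarith
    positivity
  have a2 : 0 ≤ K ^ 2 * w ^ 2 / r := by positivity
  have a3 : |8 * q - 4 * D - 2 * q * r| ≤ K * r := by
    rw [abs_le]; constructor <;> nlinarith
  have a4 : v * w * (8 * q - 4 * D - 2 * q * r) ≤ |v| * |w| * (K * r) := by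
    calc _ ≤ |v * w * (8 * q - 4 * D - 2 * q * r)| := le_abs_self _
      _ = |v| * |w| * |8 * q - 4 * D - 2 * q * r| := by rw [abs_mul, abs_mul]
      _ ≤ _ := by gcongr
  have a5 : |v| * |w| * (K * r) ≤ K ^ 2 * v ^ 2 + r ^ 2 * w ^ 2 / 4 := by
    have := sq_nonneg (K * |v| - r * |w| / 2)
    rw [← sq_abs v, ← sq_abs w]
    nlinarith
  have a6 : 0 ≤ w ^ 2 * (3 / 4 * r ^ 2 - 4 * q - 4 * m) := by
    apply mul_nonneg (sq_nonneg _)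
    nlinarith
  have a7 : 0 ≤ w ^ 2 * (2 * (D - 1) + 1) := by
    apply mul_nonneg (sq_nonneg _); linarith
  nlinarith

lemma decay (d : ℕ) (hd : 3 ≤ d) (m Q R : ℝ) (hm : 0 < m) (hR : 1 + 8 * Q ≤ R)
    (q V W : ℝ → ℝ) (hqm : ∀ r, R ≤ r → m ≤ q r) (hqQ : ∀ r, R ≤ r → q r ≤ Q)
    (hV : ∀ r, R ≤ r → HasDerivAt V
      (-(2 * q r / r) * V r + (4 * q r - 2 * d) / r ^ 2 * W r) r)
    (hW : ∀ r, R ≤ r → HasDerivAt W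
      (-(r / 2 + ((d : ℝ) - 1) / r - 2 * q r / r) * W r - q r * V r) r) :
    ∃ M : ℝ, 0 ≤ M ∧ ∀ r, R ≤ r → r ^ (4 * m) * (V r ^ 2 + W r ^ 2 / r) ≤ M := by
  have hd' : (1 : ℝ) ≤ d := by exact_mod_cast (by omega : 1 ≤ d)
  have hQ0 : 0 < Q := by linarith [hqm R le_rfl, hqQ R le_rfl]
  have hR0 : 0 < R := by linarith
  set K : ℝ := 10 * Q + 4 * d with hK
  set G : ℝ → ℝ := fun r => (r ^ (4 * m) * Real.exp (K ^ 2 / r)) * (V r ^ 2 + W r ^ 2 / r) with hG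
  have hGd : ∀ r, R ≤ r → HasDerivAt G (r ^ (4 * m) * Real.exp (K ^ 2 / r) *
     (2 * V r * (-(2 * q r / r) * V r + (4 * q r - 2 * d) / r ^ 2 * W r)
      + (2 * W r * (-(r / 2 + ((d:ℝ) - 1) / r - 2 * q r / r) * W r - q r * V r) / r - W r ^ 2 / r ^ 2)
      + (4 * m / r - K ^ 2 / r ^ 2) * (V r ^ 2 + W r ^ 2 / r))) r := by
    intro r hr
    have hr0 : 0 < r := by linarith
    have h1 : HasDerivAt (fun r : ℝ => r ^ (4 * m)) (4 * m * (r ^ (4 * m) / r)) r := by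
      have := Real.hasDerivAt_rpow_const (x := r) (p := 4 * m) (Or.inl hr0.ne')
      rwa [Real.rpow_sub_one hr0.ne'] at this
    have h2 : HasDerivAt (fun r : ℝ => Real.exp (K ^ 2 / r)) (Real.exp (K ^ 2 / r) * (-K ^ 2 / r ^ 2)) r := by
      have := ((hasDerivAt_const r (K ^ 2)).div (hasDerivAt_id r) hr0.ne').exp
      refine HasDerivAt.congr_deriv (this) ?_
      simp
    have h3 := ((hV r hr).pow 2).add (((hW r hr).pow 2).div (hasDerivAt_id r) hr0.ne')
    have h4 := (h1.mul h2).mul h3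
    refine HasDerivAt.congr_deriv (h4) ?_
    simp only [Pi.add_apply, Pi.mul_apply, Pi.div_apply, Pi.pow_apply, id]
    field_simp
    ring
  have hanti : AntitoneOn G (Ici R) := by
    apply antitoneOn_of_deriv_nonpos (convex_Ici R)
    · intro r hr
      exact (hGd r hr).continuousAt.continuousWithinAt
    · intro r hr
      rw [interior_Ici] at hr
      exact (hGd r (le_of_lt hr)).differentiableAt.differentiableWithinAt
    · intro r hr
      rw [interior_Ici] at hr
      have hr' : R ≤ r := le_of_lt hr
      have hr0 : 0 < r := by linarith
      rw [(hGd r hr').deriv]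
      apply mul_nonpos_of_nonneg_of_nonpos (by positivity)
      exact quad_ineq d m Q (q r) r (V r) (W r) hd' hm (hqm r hr') (hqQ r hr') (by linarith)
  have hpos : ∀ r, R ≤ r → 0 ≤ r ^ (4 * m) * (V r ^ 2 + W r ^ 2 / r) := by
    intro r hr
    have hr0 : 0 < r := by linarith
    positivity
  have hle : ∀ r, R ≤ r → r ^ (4 * m) * (V r ^ 2 + W r ^ 2 / r) ≤ G R := by
    intro r hr
    have hr0 : 0 < r := by linarith
    refine le_trans ?_ (hanti (by simp) hr hr)
    have h1 : 1 ≤ Real.exp (K ^ 2 / r) := Real.one_le_exp (by positivity)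
    have h2 := hpos r hr
    simp only [hG]
    nlinarith
  exact ⟨G R, (hpos R le_rfl).trans (hle R le_rfl), hle⟩

lemma conv_of_deriv_bound (Z Z' : ℝ → ℝ) (R C : ℝ) (hR : 0 < R)
    (hZ : ∀ r, R ≤ r → HasDerivAt Z (Z' r) r)
    (hb : ∀ r, R ≤ r → |Z' r| ≤ C * r ^ (-(3/2) : ℝ)) :
    ∃ L, Tendsto Z atTop (nhds L) := by
  refine ⟨_, MeasureTheory.tendsto_limUnder_of_hasDerivAt_of_integrableOn_Ioi
    (f' := deriv Z) (a := R) ?_ ?_⟩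
  · intro r hr
    exact (hZ r (le_of_lt hr)).differentiableAt.hasDerivAt
  · have hi : MeasureTheory.IntegrableOn (fun r : ℝ => C * r ^ (-(3/2) : ℝ)) (Ioi R) :=
      (integrableOn_Ioi_rpow_of_lt (by norm_num) hR).const_mul C
    refine MeasureTheory.Integrable.mono' hi (measurable_deriv Z).aestronglyMeasurable ?_
    refine (MeasureTheory.ae_restrict_iff' measurableSet_Ioi).2 (Eventually.of_forall ?_)
    intro r hr
    rw [(hZ r (le_of_lt hr)).deriv]
    exact hb r (le_of_lt hr)

lemma conv_main (d : ℕ) (hd : 3 ≤ d) (p : ℝ) (hp : 1 < p) (U W W' : ℝ → ℝ)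
    (hU : ∀ r, 0 < r → HasDerivAt U (W r) r) (hW : ∀ r, 0 < r → HasDerivAt W (W' r) r)
    (heq : ∀ r : ℝ, 0 < r → W' r + (((d : ℝ) - 1) / r + r / 2) * W r
        + U r / (p - 1) + |U r| ^ (p - 1) * U r = 0) 
    (hB : ∃ C : ℝ, ∀ r : ℝ, 1 ≤ r → |U r| ≤ C) :
    ∃ L : ℝ, Tendsto (fun r : ℝ => r ^ (2 / (p - 1)) * U r) atTop (nhds L) := by
  obtain ⟨B, hB⟩ := hB
  have hp1 : 0 < p - 1 := by linarith
  set m : ℝ := 1 / (p - 1) with hm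
  have hm0 : 0 < m := by positivity
  have e2m : 2 / (p - 1) = 2 * m := by rw [hm]; ring
  rw [e2m]
  have hmp : m * (p - 1) = 1 := by rw [hm]; field_simp
  set q : ℝ → ℝ := fun r => m + |U r| ^ (p - 1) with hq
  set Q : ℝ := m + B ^ (p - 1) with hQ
  have hB0 : 0 ≤ B := (abs_nonneg _).trans (hB 1 le_rfl)
  have hBp : 0 ≤ B ^ (p - 1) := by positivity
  set R : ℝ := 1 + 8 * Q with hR
  have hR1 : 1 ≤ R := by linarith
  have hqm : ∀ r, R ≤ r → m ≤ q r := by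
    intro r hr
    have : 0 ≤ |U r| ^ (p - 1) := by positivity
    simp only [hq]; linarith
  have hqQ : ∀ r, R ≤ r → q r ≤ Q := by
    intro r hr
    have := hB r (by linarith)
    simp only [hq, hQ]
    gcongr
  set V : ℝ → ℝ := fun r => U r + 2 / r * W r with hV
  have hWe : ∀ r, 0 < r → W' r = -(r / 2 + ((d : ℝ) - 1) / r) * W r - q r * U r := by
    intro r hr
    have := heq r hr
    have e : U r / (p - 1) = m * U r := by rw [hm]; ring
    rw [e] at this
    simp only [hq]
    linarith
  have hVd : ∀ r, R ≤ r → HasDerivAt V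
      (-(2 * q r / r) * V r + (4 * q r - 2 * d) / r ^ 2 * W r) r := by
    intro r hr
    have hr0 : 0 < r := by linarith
    have h1 : HasDerivAt (fun r : ℝ => 2 / r) (-2 / r ^ 2) r := by
      have := ((hasDerivAt_const r (2:ℝ)).div (hasDerivAt_id r) hr0.ne')
      refine HasDerivAt.congr_deriv (this) ?_
      simp
    have h := (hU r hr0).add (h1.mul (hW r hr0))
    refine HasDerivAt.congr_deriv (h) ?_
    rw [hWe r hr0]
    simp only [hV]
    field_simp
    ring
  have hWd : ∀ r, R ≤ r → HasDerivAt W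
      (-(r / 2 + ((d : ℝ) - 1) / r - 2 * q r / r) * W r - q r * V r) r := by
    intro r hr
    have hr0 : 0 < r := by linarith
    refine HasDerivAt.congr_deriv (hW r hr0) ?_
    rw [hWe r hr0]
    simp only [hV]
    field_simp
    ring
  obtain ⟨M, hM0, hM⟩ := decay d hd m Q R hm0 le_rfl q V W hqm hqQ hVd hWd
  set N := Real.sqrt M with hN
  have hN0 : 0 ≤ N := Real.sqrt_nonneg _
  have hsq : ∀ r, R ≤ r → r ^ (4 * m) = (r ^ (2 * m)) ^ 2 := by
    intro r hr
    have hr0 : 0 < r := by linarith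
    rw [← Real.rpow_natCast, ← Real.rpow_mul hr0.le]
    congr 1; push_cast; ring
  have hVb : ∀ r, R ≤ r → |r ^ (2 * m) * V r| ≤ N := by
    intro r hr
    have hr0 : 0 < r := by linarith
    apply Real.abs_le_sqrt
    have := hM r hr
    rw [hsq r hr] at this
    have h2 : 0 ≤ (r ^ (2 * m)) ^ 2 * (W r ^ 2 / r) := by positivity
    nlinarith
  have hWb : ∀ r, R ≤ r → |r ^ (2 * m) * W r| ≤ N * r ^ (1/2 : ℝ) := by
    intro r hr
    have hr0 : 0 < r := by linarith
    rw [← Real.sqrt_eq_rpow, hN, ← Real.sqrt_mul hM0]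
    apply Real.abs_le_sqrt
    have := hM r hr
    rw [hsq r hr] at this
    have h2 : 0 ≤ (r ^ (2 * m)) ^ 2 * (V r ^ 2) := by positivity
    have h3 : (r ^ (2 * m)) ^ 2 * (W r ^ 2 / r) ≤ M := by nlinarith
    have h4 : (r ^ (2 * m) * W r) ^ 2 = (r ^ (2 * m)) ^ 2 * (W r ^ 2 / r) * r := by
      field_simp
    rw [h4]
    gcongr
  have hhalf : ∀ r : ℝ, R ≤ r → r ^ (1/2 : ℝ) = r * r ^ (-(1/2) : ℝ) := by
    intro r hr
    have hr0 : 0 < r := by linarith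
    nth_rw 2 [← Real.rpow_one r]
    rw [← Real.rpow_add hr0]; norm_num
  have h32 : ∀ r : ℝ, R ≤ r → r ^ (-(1/2) : ℝ) = r * r ^ (-(3/2) : ℝ) := by
    intro r hr
    have hr0 : 0 < r := by linarith
    nth_rw 2 [← Real.rpow_one r]
    rw [← Real.rpow_add hr0]; norm_num
  have hle1 : ∀ r : ℝ, R ≤ r → r ^ (-(1/2) : ℝ) ≤ 1 := by
    intro r hr
    exact Real.rpow_le_one_of_one_le_of_nonpos (by linarith) (by norm_num)
  have hUW : ∀ r, R ≤ r → |r ^ (2 * m) * (2 / r * W r)| ≤ 2 * N * r ^ (-(1/2) : ℝ) := by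
    intro r hr
    have hr0 : 0 < r := by linarith
    have e : r ^ (2 * m) * (2 / r * W r) = 2 / r * (r ^ (2 * m) * W r) := by ring
    rw [e, abs_mul, abs_of_pos (by positivity : 0 < 2 / r)]
    calc _ ≤ 2 / r * (N * r ^ (1/2 : ℝ)) := by gcongr; exact hWb r hr
      _ = _ := by rw [hhalf r hr]; field_simp
  have hUb : ∀ r, R ≤ r → |r ^ (2 * m) * U r| ≤ 3 * N := by
    intro r hr
    have e : r ^ (2 * m) * U r = r ^ (2 * m) * V r - r ^ (2 * m) * (2 / r * W r) := by
      simp only [hV]; ring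
    rw [e]
    have h1 := abs_sub (r ^ (2 * m) * V r) (r ^ (2 * m) * (2 / r * W r))
    have h2 := hVb r hr
    have h3 := hUW r hr
    have h4 := hle1 r hr
    nlinarith
  have hqb : ∀ r, R ≤ r → r ^ 2 * |U r| ^ (p - 1) ≤ (3 * N) ^ (p - 1) := by
    intro r hr
    have hr0 : 0 < r := by linarith
    have h1 : |r ^ (2 * m) * U r| ^ (p - 1) ≤ (3 * N) ^ (p - 1) := by
      have := hUb r hr
      gcongr
    rw [abs_mul, abs_of_pos (by positivity : 0 < r ^ (2 * m)),
      Real.mul_rpow (by positivity) (by positivity), ← Real.rpow_mul hr0.le] at h1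
    have : 2 * m * (p - 1) = (2 : ℕ) := by push_cast; linarith
    rw [this, Real.rpow_natCast] at h1
    exact h1
  -- slow variable converges
  have hconv : ∃ L, Tendsto (fun r => r ^ (2 * m) * V r) atTop (nhds L) := by
    apply conv_of_deriv_bound _ (fun r => -(2 * |U r| ^ (p - 1) / r) * (r ^ (2 * m) * V r)
      + (4 * q r - 2 * d) / r ^ 2 * (r ^ (2 * m) * W r)) R
      (2 * (3 * N) ^ (p - 1) * N + (4 * Q + 2 * d) * N) (by linarith)
    · intro r hr
      have hr0 : 0 < r := by linarith
      have h1 : HasDerivAt (fun r : ℝ => r ^ (2 * m)) (2 * m * (r ^ (2 * m) / r)) r := by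
        have := Real.hasDerivAt_rpow_const (x := r) (p := 2 * m) (Or.inl hr0.ne')
        rwa [Real.rpow_sub_one hr0.ne'] at this
      have h := h1.mul (hVd r hr)
      refine HasDerivAt.congr_deriv (h) ?_
      simp only [hq]
      field_simp
      ring
    · intro r hr
      have hr0 : 0 < r := by linarith
      have hr1 : 1 ≤ r := by linarith
      have hd0 : (0:ℝ) ≤ d := by positivity
      have b1 : |-(2 * |U r| ^ (p - 1) / r) * (r ^ (2 * m) * V r)| ≤
          2 * (3 * N) ^ (p - 1) * N * r ^ (-(3/2) : ℝ) := by
        rw [abs_mul, abs_neg, abs_of_nonneg (by positivity : 0 ≤ 2 * |U r| ^ (p - 1) / r)]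
        have c1 : 2 * |U r| ^ (p - 1) / r ≤ 2 * (3 * N) ^ (p - 1) * r ^ (-(3/2) : ℝ) := by
          have c2 : |U r| ^ (p - 1) ≤ (3 * N) ^ (p - 1) / r ^ 2 := by
            rw [le_div_iff₀ (by positivity)]; linarith [hqb r hr]
          have c3 : 1 / r ^ 3 ≤ r ^ (-(3/2) : ℝ) := by
            have : 1 / r ^ 3 = r ^ (-3 : ℝ) := by
              rw [Real.rpow_neg hr0.le, one_div]; norm_cast
            rw [this]
            exact Real.rpow_le_rpow_of_exponent_le hr1 (by norm_num)
          calc _ ≤ 2 * ((3 * N) ^ (p - 1) / r ^ 2) / r := by gcongr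
            _ = 2 * (3 * N) ^ (p - 1) * (1 / r ^ 3) := by field_simp
            _ ≤ _ := by gcongr
        calc _ ≤ (2 * (3 * N) ^ (p - 1) * r ^ (-(3/2) : ℝ)) * N := by
              gcongr; exact hVb r hr
          _ = _ := by ring
      have b2 : |(4 * q r - 2 * d) / r ^ 2 * (r ^ (2 * m) * W r)| ≤
          (4 * Q + 2 * d) * N * r ^ (-(3/2) : ℝ) := by
        rw [abs_mul, abs_div, abs_of_pos (by positivity : 0 < r ^ 2)]
        have c1 : |4 * q r - 2 * d| ≤ 4 * Q + 2 * d := by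
          have := hqm r hr
          have := hqQ r hr
          rw [abs_le]; constructor <;> linarith
        have c0 : 0 ≤ 4 * Q + 2 * d := (abs_nonneg _).trans c1
        calc _ ≤ (4 * Q + 2 * d) / r ^ 2 * (N * r ^ (1/2 : ℝ)) := by
              gcongr; exact hWb r hr
          _ = _ := by rw [hhalf r hr, h32 r hr]; field_simp
      refine (abs_add_le _ _).trans ?_
      linarith
  obtain ⟨L, hL⟩ := hconv
  refine ⟨L, ?_⟩
  have hz : Tendsto (fun r => r ^ (2 * m) * (2 / r * W r)) atTop (nhds 0) := by
    have h0 : Tendsto (fun r : ℝ => 2 * N * r ^ (-(1/2) : ℝ)) atTop (nhds 0) := by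
      have := (tendsto_rpow_neg_atTop (y := 1/2) (by norm_num)).const_mul (2 * N)
      simpa using this
    refine squeeze_zero_norm' ?_ h0
    filter_upwards [eventually_ge_atTop R] with r hr
    exact hUW r hr
  have := hL.sub hz
  rw [sub_zero] at this
  refine this.congr ?_
  intro r
  simp only [hV]; ring

/-- Any expander profile is bounded on `[0,∞)` and `lim_{ρ→∞} ρ^{2/(p−1)} U(ρ)` exists
and is finite. -/
theorem stmt1 (d : ℕ) (hd : 3 ≤ d) (p : ℝ) (hp : 1 + 2 / (d : ℝ) < p)
    (α : ℝ) (hα : 0 < α) (U : ℝ → ℝ) (hU : IsExpander d p α U) :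
    (∃ C : ℝ, ∀ ρ : ℝ, 0 ≤ ρ → |U ρ| ≤ C) ∧
      ∃ L : ℝ, Tendsto (fun ρ : ℝ => ρ ^ (2 / (p - 1)) * U ρ) atTop (nhds L) := by
  obtain ⟨hC, h0, h0', heq⟩ := hU
  have hp' : 1 < p := by
    have : (0:ℝ) ≤ 2 / d := by positivity
    linarith
  have hat : ∀ r : ℝ, 0 < r → ContDiffAt ℝ 2 U r := fun r hr =>
    hC.contDiffAt (Ici_mem_nhds hr)
  have hU1 : ∀ r : ℝ, 0 < r → HasDerivAt U (deriv U r) r := fun r hr =>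
    ((hat r hr).differentiableAt (by norm_num)).hasDerivAt
  have hU2 : ∀ r : ℝ, 0 < r → HasDerivAt (deriv U) (deriv (deriv U) r) r := by
    intro r hr
    have h := (hat r hr).derivWithin (m := 1) (by norm_num)
    exact (h.differentiableAt (by norm_num)).hasDerivAt
  have hB := energy_bdd d hd p hp' U (deriv U) (deriv (deriv U)) hU1 hU2 heq
  refine ⟨?_, conv_main d hd p hp' U (deriv U) (deriv (deriv U)) hU1 hU2 heq hB⟩
  obtain ⟨B, hB⟩ := hB
  obtain ⟨B', hB'⟩ := isCompact_Icc.exists_bound_of_continuousOn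
    (hC.continuousOn.mono (Icc_subset_Ici_self : Icc (0:ℝ) 1 ⊆ Ici 0))
  refine ⟨max B B', fun r hr => ?_⟩
  rcases le_total r 1 with h | h
  · exact le_max_of_le_right (hB' r ⟨hr, h⟩)
  · exact le_max_of_le_left (hB r h)
end
end
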